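/- Let S be a set of n ≥ 3 points in the plane in convex position. Then for every tree T ∈ 𝒯(S), exactly 2(n − 2) distinct trees in 𝒯(S) can be obtained from T by a single edge slide; that is, the edge-slide transition graph on 𝒯(S) (and likewise on the edge-labeled trees ℒ(S)) is 2(n − 2)-regular. -/

import Mathlib

open scoped Classical

noncomputable section

/-- Points in the plane. -/
abbrev Pt : Type := ℝ × ℝ

/-- The closed straight-line segment spanned by an (unordered) edge. -/
def segOf (e : Sym2 Pt) : Set Pt :=
  Sym2.lift ⟨fun p q => segment ℝ p q, fun p q => segment_symm ℝ p q⟩ e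

/-- The set of endpoints of an edge. -/
def epts (e : Sym2 Pt) : Set Pt := {p | p ∈ e}

/-- Two edges intersect in at most common endpoints (they do not cross). -/
def NoCrossPair (e f : Sym2 Pt) : Prop := segOf e ∩ segOf f ⊆ epts e ∩ epts f

/-- A set of edges is noncrossing: any two distinct edges meet in at most a common endpoint. -/
def NoCross (E : Finset (Sym2 Pt)) : Prop := ∀ e ∈ E, ∀ f ∈ E, e ≠ f → NoCrossPair e f

/-- `E` is the edge set of a noncrossing straight-line spanning tree on the point set `S`:
all edges are nondegenerate with endpoints in `S`, pairwise noncrossing, there are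
`|S| - 1` of them, and they connect all of `S`. -/
def IsPST (S : Finset Pt) (E : Finset (Sym2 Pt)) : Prop :=
  (∀ e ∈ E, ¬ e.IsDiag ∧ ∀ p ∈ e, p ∈ S) ∧
  NoCross E ∧ E.card + 1 = S.card ∧
  ∀ p ∈ S, ∀ q ∈ S, Relation.ReflTransGen (fun a b => s(a, b) ∈ E) p q

/-- `S` is in general position: no three of its points are collinear. -/
def GenPos (S : Finset Pt) : Prop :=
  ∀ p ∈ S, ∀ q ∈ S, ∀ r ∈ S, p ≠ q → p ≠ r → q ≠ r → ¬ Collinear ℝ ({p, q, r} : Set Pt)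

/-- `S` is in convex position: every point of `S` is a vertex of the convex hull of `S`. -/
def ConvexPos (S : Finset Pt) : Prop :=
  ∀ p ∈ S, p ∉ convexHull ℝ ((S : Set Pt) \ {p})

/-- The open interior of the triangle with vertices `p`, `q`, `r`. -/
def triInt (p q r : Pt) : Set Pt := interior (convexHull ℝ ({p, q, r} : Set Pt))

/-- `y` can be reached from `x` by a sequence of at most `m` `step`-operations. -/
def ReachesIn {α : Type*} (step : α → α → Prop) (m : ℕ) (x y : α) : Prop :=
  ∃ k ≤ m, ∃ f : ℕ → α, f 0 = x ∧ f k = y ∧ ∀ i < k, step (f i) (f (i + 1))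

/-- A simultaneous rotation from `E₁` to `E₂`: a bijection `π` between the removed and the
inserted edges such that each `e` shares an endpoint with `π e` and `π e` crosses no edge
of `E₁`. -/
def SimRotation (S : Finset Pt) (E₁ E₂ : Finset (Sym2 Pt)) : Prop :=
  IsPST S E₁ ∧ IsPST S E₂ ∧ ∃ π : Sym2 Pt → Sym2 Pt,
    Set.BijOn π ↑(E₁ \ E₂) ↑(E₂ \ E₁) ∧
    ∀ e ∈ E₁ \ E₂, (∃ p, p ∈ e ∧ p ∈ π e) ∧ ∀ f ∈ E₁, NoCrossPair (π e) f

/-- An empty-triangle rotation replaces an edge `pq` by an adjacent edge `pr` such that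
no edge of either tree meets the interior of the triangle `pqr`. -/
def EmptyTriRot (S : Finset Pt) (E₁ E₂ : Finset (Sym2 Pt)) : Prop :=
  IsPST S E₁ ∧ IsPST S E₂ ∧ ∃ p q r : Pt,
    E₁ \ E₂ = {s(p, q)} ∧ E₂ \ E₁ = {s(p, r)} ∧
    ∀ g ∈ E₁ ∪ E₂, Disjoint (segOf g) (triInt p q r)

/-- A simultaneous empty-triangle rotation. -/
def SimEmptyTriRot (S : Finset Pt) (E₁ E₂ : Finset (Sym2 Pt)) : Prop :=
  IsPST S E₁ ∧ IsPST S E₂ ∧ ∃ π : Sym2 Pt → Sym2 Pt,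
    Set.BijOn π ↑(E₁ \ E₂) ↑(E₂ \ E₁) ∧
    ∀ e ∈ E₁ \ E₂, ∃ p q r : Pt, e = s(p, q) ∧ π e = s(p, r) ∧
      ∀ g ∈ E₁ ∪ E₂, Disjoint (segOf g) (triInt p q r)

/-- An edge slide replaces `pq` by `pr`, where `qr` is an edge of both trees and no edge of
either tree meets the interior of the triangle `pqr`. -/
def EdgeSlide (S : Finset Pt) (E₁ E₂ : Finset (Sym2 Pt)) : Prop :=
  IsPST S E₁ ∧ IsPST S E₂ ∧ ∃ p q r : Pt,
    E₁ \ E₂ = {s(p, q)} ∧ E₂ \ E₁ = {s(p, r)} ∧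
    s(q, r) ∈ E₁ ∧ s(q, r) ∈ E₂ ∧
    ∀ g ∈ E₁ ∪ E₂, Disjoint (segOf g) (triInt p q r)

/-- A simultaneous edge slide. -/
def SimEdgeSlide (S : Finset Pt) (E₁ E₂ : Finset (Sym2 Pt)) : Prop :=
  IsPST S E₁ ∧ IsPST S E₂ ∧ ∃ π : Sym2 Pt → Sym2 Pt,
    Set.BijOn π ↑(E₁ \ E₂) ↑(E₂ \ E₁) ∧
    ∀ e ∈ E₁ \ E₂, ∃ p q r : Pt, e = s(p, q) ∧ π e = s(p, r) ∧
      s(q, r) ∈ E₁ ∧ s(q, r) ∈ E₂ ∧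
      ∀ g ∈ E₁ ∪ E₂, Disjoint (segOf g) (triInt p q r)

/-- `e` is an edge of the convex hull of `S`: it joins two distinct points of `S` and its
segment lies on the boundary of the convex hull of `S`. -/
def IsHullEdge (S : Finset Pt) (e : Sym2 Pt) : Prop :=
  ∃ u v : Pt, e = s(u, v) ∧ u ∈ S ∧ v ∈ S ∧ u ≠ v ∧
    segment ℝ u v ⊆ frontier (convexHull ℝ (S : Set Pt))

/-- The spanning star centered at `v`. -/
def starAt (S : Finset Pt) (v : Pt) : Finset (Sym2 Pt) := (S.erase v).image (fun w => s(v, w))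

/-- An edge-labeled tree: an edge set together with a labeling function. -/
abbrev LTree := Finset (Sym2 Pt) × (Sym2 Pt → ℕ)

/-- `T` is an edge-labeled noncrossing straight-line spanning tree on `S`: its edge set is in
`𝒯(S)` and its labeling is a bijection from the edges onto `{1, …, |S| - 1}`
(normalized to `0` on non-edges). -/
def IsLabeledPST (S : Finset Pt) (T : LTree) : Prop :=
  IsPST S T.1 ∧ Set.BijOn T.2 ↑T.1 (Set.Icc 1 (S.card - 1)) ∧ ∀ e, e ∉ T.1 → T.2 e = 0

/-- A simultaneous exchange on edge-labeled trees: an arbitrary bijection between removed and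
inserted edges transferring labels, all common edges keeping their labels. -/
def LabSimExchange (S : Finset Pt) (T₁ T₂ : LTree) : Prop :=
  IsLabeledPST S T₁ ∧ IsLabeledPST S T₂ ∧ ∃ π : Sym2 Pt → Sym2 Pt,
    Set.BijOn π ↑(T₁.1 \ T₂.1) ↑(T₂.1 \ T₁.1) ∧
    (∀ e ∈ T₁.1 \ T₂.1, T₂.2 (π e) = T₁.2 e) ∧
    ∀ e ∈ T₁.1 ∩ T₂.1, T₂.2 e = T₁.2 e

/-- A rotation on edge-labeled trees: the removed and inserted edges share an endpoint and do
not cross, the label of the removed edge is transferred, and all other labels are kept. -/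
def LabRotation (S : Finset Pt) (T₁ T₂ : LTree) : Prop :=
  IsLabeledPST S T₁ ∧ IsLabeledPST S T₂ ∧ ∃ e₁ e₂ : Sym2 Pt,
    T₁.1 \ T₂.1 = {e₁} ∧ T₂.1 \ T₁.1 = {e₂} ∧
    (∃ p, p ∈ e₁ ∧ p ∈ e₂) ∧ NoCrossPair e₁ e₂ ∧
    T₂.2 e₂ = T₁.2 e₁ ∧ ∀ e ∈ T₁.1 ∩ T₂.1, T₂.2 e = T₁.2 e

/-- An edge slide on edge-labeled trees, transferring the label of the slid edge. -/
def LabEdgeSlide (S : Finset Pt) (T₁ T₂ : LTree) : Prop :=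
  IsLabeledPST S T₁ ∧ IsLabeledPST S T₂ ∧ ∃ p q r : Pt,
    T₁.1 \ T₂.1 = {s(p, q)} ∧ T₂.1 \ T₁.1 = {s(p, r)} ∧
    s(q, r) ∈ T₁.1 ∧ s(q, r) ∈ T₂.1 ∧
    (∀ g ∈ T₁.1 ∪ T₂.1, Disjoint (segOf g) (triInt p q r)) ∧
    T₂.2 (s(p, r)) = T₁.2 (s(p, q)) ∧ ∀ e ∈ T₁.1 ∩ T₂.1, T₂.2 e = T₁.2 e

def dt (a b c : Pt) : ℝ := (b.1 - a.1) * (c.2 - a.2) - (b.2 - a.2) * (c.1 - a.1)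

/-- A rank function exhibiting the cyclic order of `S`. -/
def RkOK (S : Finset Pt) (rk : Pt → ℕ) (N : ℕ) : Prop :=
  (∀ a ∈ S, rk a < N) ∧ (∀ a ∈ S, ∀ b ∈ S, rk a = rk b → a = b) ∧
  ∀ a ∈ S, ∀ b ∈ S, ∀ c ∈ S, rk a < rk b → rk b < rk c → 0 < dt a b c

theorem exists_rk (S : Finset Pt) (hS : ConvexPos S) : ∃ rk N, RkOK S rk N := by
  rcases S.eq_empty_or_nonempty with rfl | ⟨p0, hp0⟩
  · exact ⟨fun _ => 0, 0, by simp [RkOK]⟩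
  have hfin : ((S : Set Pt) \ {p0}).Finite := S.finite_toSet.subset Set.sdiff_subset
  obtain ⟨f, u, hu, hf⟩ := geometric_hahn_banach_point_closed (convex_convexHull ℝ _)
    (hfin.isClosed_convexHull ℝ) (hS p0 hp0)
  have hfx : ∀ x : Pt, f x = x.1 * f (1, 0) + x.2 * f (0, 1) := by
    intro x
    have : x = x.1 • ((1, 0) : Pt) + x.2 • ((0, 1) : Pt) := by ext <;> simp
    conv_lhs => rw [this]
    simp only [map_add, map_smul, smul_eq_mul]
  set α := f (1, 0) with hα
  set β := f (0, 1) with hβ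
  have hpos : ∀ x ∈ S, x ≠ p0 → 0 < (x.1 - p0.1) * α + (x.2 - p0.2) * β := by
    intro x hx hxp
    have := hf x (subset_convexHull ℝ _ ⟨hx, by simpa using hxp⟩)
    rw [hfx] at this hu
    linarith
  let A : Pt → ℝ := fun x => (x.1 - p0.1) * α + (x.2 - p0.2) * β
  let B : Pt → ℝ := fun x => (x.2 - p0.2) * α - (x.1 - p0.1) * β
  have hA : ∀ x ∈ S, x ≠ p0 → 0 < A x := hpos
  have hN : ∀ x ∈ S, x ≠ p0 → 0 < α ^ 2 + β ^ 2 := by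
    intro x hx hxp
    have h := hpos x hx hxp
    by_contra hc
    have h1 : α = 0 := by nlinarith [sq_nonneg α, sq_nonneg β]
    have h2 : β = 0 := by nlinarith [sq_nonneg α, sq_nonneg β]
    rw [h1, h2] at h; simp at h
  have hD : ∀ a b : Pt, (α ^ 2 + β ^ 2) * dt p0 a b = A a * B b - A b * B a := by
    intro a b; simp only [A, B, dt]; ring
  let κ : Pt → ℝ := fun x => B x / A x
  have hκ : ∀ a ∈ S, a ≠ p0 → ∀ b ∈ S, b ≠ p0 → κ a < κ b → 0 < dt p0 a b := by
    intro a ha hap b hb hbp h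
    have h1 := hA a ha hap
    have h2 := hA b hb hbp
    simp only [κ] at h
    rw [div_lt_div_iff₀ h1 h2] at h
    have h3 := hD a b
    have h4 := hN a ha hap
    by_contra hc
    nlinarith
  have key : ∀ a ∈ S, a ≠ p0 → ∀ b ∈ S, b ≠ p0 → dt p0 a b = 0 → A a ≤ A b → a = b := by
    intro a ha hap b hb hbp h hle
    by_contra hab
    have h1 := hA a ha hap
    have h2 := hA b hb hbp
    have h4 := hN a ha hap
    apply hS a ha
    have hsub : segment ℝ p0 b ⊆ convexHull ℝ ((S : Set Pt) \ {a}) :=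
      segment_subset_convexHull ⟨hp0, by simpa using Ne.symm hap⟩ ⟨hb, by simpa using Ne.symm hab⟩
    apply hsub
    refine ⟨1 - A a / A b, A a / A b, ?_, by positivity, by ring, ?_⟩
    · rw [sub_nonneg, div_le_one h2]; exact hle
    · simp only [dt] at h
      ext
      · simp only [Prod.fst_add, Prod.smul_fst, smul_eq_mul]
        field_simp
        simp only [A]
        linear_combination (-β) * h
      · simp only [Prod.snd_add, Prod.smul_snd, smul_eq_mul]
        field_simp
        simp only [A]
        linear_combination (α) * h
  have hinj : ∀ a ∈ S, a ≠ p0 → ∀ b ∈ S, b ≠ p0 → κ a = κ b → a = b := by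
    intro a ha hap b hb hbp h
    have h1 := hA a ha hap
    have h2 := hA b hb hbp
    have h4 := hN a ha hap
    simp only [κ] at h
    rw [div_eq_div_iff h1.ne' h2.ne'] at h
    have h3 : dt p0 a b = 0 := by
      have := hD a b
      have h5 : (α ^ 2 + β ^ 2) * dt p0 a b = 0 := by rw [this]; linarith
      rcases mul_eq_zero.1 h5 with h6 | h6
      · exact absurd h6 h4.ne'
      · exact h6
    rcases le_total (A a) (A b) with hle | hle
    · exact key a ha hap b hb hbp h3 hle
    · refine (key b hb hbp a ha hap ?_ hle).symm
      simp only [dt] at h3 ⊢; linarith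
  let rk : Pt → ℕ := fun x => if x = p0 then 0 else
    1 + ((S.erase p0).filter (fun b => κ b < κ x)).card
  have hmono : ∀ a ∈ S, a ≠ p0 → ∀ b ∈ S, b ≠ p0 → κ a < κ b → rk a < rk b := by
    intro a ha hap b hb hbp h
    simp only [rk, hap, hbp, if_false]
    apply Nat.add_lt_add_left
    apply Finset.card_lt_card
    rw [Finset.ssubset_iff_of_subset]
    · exact ⟨a, by simp [ha, hap, h], by simp⟩
    · intro x hx
      simp only [Finset.mem_filter] at hx ⊢
      exact ⟨hx.1, hx.2.trans h⟩
  have hmono' : ∀ a ∈ S, a ≠ p0 → ∀ b ∈ S, b ≠ p0 → rk a < rk b → κ a < κ b := by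
    intro a ha hap b hb hbp h
    rcases lt_trichotomy (κ a) (κ b) with h1 | h1 | h1
    · exact h1
    · rw [hinj a ha hap b hb hbp h1] at h; exact absurd h (lt_irrefl _)
    · exact absurd (hmono b hb hbp a ha hap h1) (by omega)
  have hrk0 : rk p0 = 0 := by simp [rk]
  have hrkp : ∀ x, x ≠ p0 → 0 < rk x := by intro x hx; simp [rk, hx]
  refine ⟨rk, S.card + 2, ?_, ?_, ?_⟩
  · intro a ha
    simp only [rk]
    split_ifs
    · omega
    · have := Finset.card_le_card (Finset.filter_subset (fun b => κ b < κ a) (S.erase p0))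
      have := Finset.card_le_card (Finset.erase_subset p0 S)
      omega
  · intro a ha b hb h
    by_cases hap : a = p0
    · by_contra hab
      have := hrkp b (fun h => hab (hap.trans h.symm))
      rw [hap] at h; omega
    by_cases hbp : b = p0
    · have := hrkp a hap
      rw [hbp] at h; omega
    rcases lt_trichotomy (κ a) (κ b) with h1 | h1 | h1
    · have := hmono a ha hap b hb hbp h1; omega
    · exact hinj a ha hap b hb hbp h1
    · have := hmono b hb hbp a ha hap h1; omega
  · intro a ha b hb c hc hab hbc
    have hbp : b ≠ p0 := by rintro rfl; omega
    have hcp : c ≠ p0 := by rintro rfl; omega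
    have hDbc := hκ b hb hbp c hc hcp (hmono' b hb hbp c hc hcp hbc)
    by_cases hap : a = p0
    · rw [hap]; exact hDbc
    have hDab := hκ a ha hap b hb hbp (hmono' a ha hap b hb hbp hab)
    have hDac := hκ a ha hap c hc hcp (hmono' a ha hap c hc hcp (hab.trans hbc))
    by_contra hcon
    have hid : dt a b c = dt p0 b c - dt p0 a c + dt p0 a b := by simp only [dt]; ring
    apply hS b hb
    have hcv := convex_convexHull ℝ ((S : Set Pt) \ {b})
    have m0 : p0 ∈ convexHull ℝ ((S : Set Pt) \ {b}) :=
      subset_convexHull ℝ _ ⟨hp0, by simpa using Ne.symm hbp⟩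
    have ma : a ∈ convexHull ℝ ((S : Set Pt) \ {b}) :=
      subset_convexHull ℝ _ ⟨ha, by rintro rfl; omega⟩
    have mc : c ∈ convexHull ℝ ((S : Set Pt) \ {b}) :=
      subset_convexHull ℝ _ ⟨hc, by rintro rfl; omega⟩
    have hb' : b = (1 - (dt p0 b c + dt p0 a b) / dt p0 a c) • p0
        + ((dt p0 b c / dt p0 a c) • a + (dt p0 a b / dt p0 a c) • c) := by
      ext
      · simp only [Prod.fst_add, Prod.smul_fst, smul_eq_mul]
        field_simp
        simp only [dt]; ring
      · simp only [Prod.snd_add, Prod.smul_snd, smul_eq_mul]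
        field_simp
        simp only [dt]; ring
    have := hcv.sum_mem (t := Finset.univ)
      (w := ![1 - (dt p0 b c + dt p0 a b) / dt p0 a c, dt p0 b c / dt p0 a c,
        dt p0 a b / dt p0 a c]) (z := ![p0, a, c]) ?_ ?_ ?_
    · simp only [Fin.sum_univ_three] at this
      rw [← add_assoc] at hb'
      simp only [Matrix.cons_val_zero, Matrix.cons_val_one, Matrix.cons_val] at this
      rwa [← hb'] at this
    · intro i _
      fin_cases i
      · simp only [Fin.zero_eta, Matrix.cons_val_zero]
        rw [sub_nonneg, div_le_one hDac]; linarith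
      · simp; positivity
      · simp; positivity
    · simp only [Fin.sum_univ_three]; simp; ring
    · intro i _
      fin_cases i
      · exact m0
      · exact ma
      · exact mc

def InN (a b c : ℕ) : Prop := (a < c ∧ c < b) ∨ (b < c ∧ c < a)
def OutN (a b c : ℕ) : Prop := (c < a ∧ c < b) ∨ (a < c ∧ b < c)
def Alt (a b c d : ℕ) : Prop := (InN a b c ∧ OutN a b d) ∨ (OutN a b c ∧ InN a b d)

theorem line_side {S rk N} (h : RkOK S rk N) {a b : Pt} (ha : a ∈ S) (hb : b ∈ S) (hab : a ≠ b) :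
    ∃ σ : ℝ, σ ≠ 0 ∧ ∀ c ∈ S, (InN (rk a) (rk b) (rk c) → 0 < σ * dt a b c) ∧
      (OutN (rk a) (rk b) (rk c) → σ * dt a b c < 0) := by
  obtain ⟨_, hinj, h3⟩ := h
  have hne : rk a ≠ rk b := fun h => hab (hinj a ha b hb h)
  rcases lt_or_gt_of_ne hne with hlt | hlt
  · refine ⟨-1, by norm_num, fun c hc => ⟨?_, ?_⟩⟩
    · rintro (⟨h1, h2⟩ | ⟨h1, h2⟩)
      · have := h3 a ha c hc b hb h1 h2
        simp only [dt] at this ⊢; linarith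
      · omega
    · rintro (⟨h1, h2⟩ | ⟨h1, h2⟩)
      · have := h3 c hc a ha b hb h1 hlt
        simp only [dt] at this ⊢; linarith
      · have := h3 a ha b hb c hc hlt h2
        simp only [dt] at this ⊢; linarith
  · refine ⟨1, by norm_num, fun c hc => ⟨?_, ?_⟩⟩
    · rintro (⟨h1, h2⟩ | ⟨h1, h2⟩)
      · omega
      · have := h3 b hb c hc a ha h1 h2
        simp only [dt] at this ⊢; linarith
    · rintro (⟨h1, h2⟩ | ⟨h1, h2⟩)
      · have := h3 c hc b hb a ha h2 hlt
        simp only [dt] at this ⊢; linarith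
      · have := h3 b hb a ha c hc hlt h1
        simp only [dt] at this ⊢; linarith

theorem trichN {S rk N} (h : RkOK S rk N) {a b c : Pt} (ha : a ∈ S) (hb : b ∈ S) (hc : c ∈ S)
    (hab : a ≠ b) :
    InN (rk a) (rk b) (rk c) ∨ OutN (rk a) (rk b) (rk c) ∨ c = a ∨ c = b := by
  obtain ⟨_, hinj, h3⟩ := h
  have hne : rk a ≠ rk b := fun h => hab (hinj a ha b hb h)
  by_cases h1 : rk c = rk a
  · exact .inr (.inr (.inl (hinj c hc a ha h1)))
  by_cases h2 : rk c = rk b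
  · exact .inr (.inr (.inr (hinj c hc b hb h2)))
  unfold InN OutN
  omega

theorem dt_aff (a b c d : Pt) (s t : ℝ) (hst : s + t = 1) :
    dt a b (s • c + t • d) = s * dt a b c + t * dt a b d := by
  obtain rfl : s = 1 - t := by linarith
  simp only [dt, Prod.fst_add, Prod.smul_fst, smul_eq_mul, Prod.snd_add, Prod.smul_snd]
  ring

theorem dt_self1 (a b : Pt) : dt a b a = 0 := by simp [dt]
theorem dt_self2 (a b : Pt) : dt a b b = 0 := by simp only [dt]; ring

theorem nocross_of_not_alt {S rk N} (h : RkOK S rk N) {a b c d : Pt} (ha : a ∈ S) (hb : b ∈ S)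
    (hc : c ∈ S) (hd : d ∈ S) (hab : a ≠ b) (hcd : c ≠ d) (hne : s(a, b) ≠ s(c, d))
    (halt : ¬ Alt (rk a) (rk b) (rk c) (rk d)) : NoCrossPair s(a, b) s(c, d) := by
  obtain ⟨σ, hσ, hs⟩ := line_side h ha hb hab
  have tc := trichN h ha hb hc hab
  have td := trichN h ha hb hd hab
  have sc := hs c hc
  have sd := hs d hd
  rintro x ⟨⟨s, t, hs0, ht0, hst, hx⟩, ⟨s', t', hs0', ht0', hst', hx'⟩⟩
  have e1 : dt a b x = 0 := by
    simp only [] at hx; rw [← hx, dt_aff _ _ _ _ _ _ hst, dt_self1, dt_self2]; ring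
  have e2 : s' * (σ * dt a b c) + t' * (σ * dt a b d) = 0 := by
    have := dt_aff a b c d s' t' hst'
    simp only [] at hx'
    rw [hx', e1] at this
    linear_combination -σ * this
  simp only [] at hx hx'
  have z0 : s' = 0 → x = d := by
    intro hz; rw [hz] at hx' hst'; rw [← hx', show t' = 1 by linarith]; simp
  have z1 : t' = 0 → x = c := by
    intro hz; rw [hz] at hx' hst'; rw [← hx', show s' = 1 by linarith]; simp
  have goalc : x = c → (c = a ∨ c = b) → x ∈ epts s(a, b) ∩ epts s(c, d) := by
    rintro rfl h; simpa [epts] using h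
  have goald : x = d → (d = a ∨ d = b) → x ∈ epts s(a, b) ∩ epts s(c, d) := by
    rintro rfl h; simpa [epts] using h
  have zero : ∀ y, (y = a ∨ y = b) → dt a b y = 0 := by
    rintro y (rfl | rfl)
    · exact dt_self1 _ _
    · exact dt_self2 _ _
  rcases tc with tc | tc | tc
  · have p1 := sc.1 tc
    rcases td with td | td | td
    · have p2 := sd.1 td
      exfalso
      have : 0 ≤ s' * (σ * dt a b c) := by positivity
      have : 0 ≤ t' * (σ * dt a b d) := by positivity
      rcases hs0'.eq_or_lt with hz | hz
      · rw [← hz] at hst'; rw [show t' = 1 by linarith] at e2; linarith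
      · have : 0 < s' * (σ * dt a b c) := by positivity
        linarith
    · exact absurd (.inl ⟨tc, td⟩) halt
    · rw [zero d td] at e2
      have : s' = 0 := by
        have : s' * (σ * dt a b c) = 0 := by linarith
        exact (mul_eq_zero.1 this).resolve_right p1.ne'
      exact goald (z0 this) td
  · have p1 := sc.2 tc
    rcases td with td | td | td
    · exact absurd (.inr ⟨tc, td⟩) halt
    · have p2 := sd.2 td
      exfalso
      rcases hs0'.eq_or_lt with hz | hz
      · rw [← hz] at hst'; rw [show t' = 1 by linarith] at e2; nlinarith
      · nlinarith
    · rw [zero d td] at e2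
      have : s' = 0 := by
        have : s' * (σ * dt a b c) = 0 := by linarith
        exact (mul_eq_zero.1 this).resolve_right p1.ne
      exact goald (z0 this) td
  · rw [zero c tc] at e2
    have key : σ * dt a b d ≠ 0 → x ∈ epts s(a, b) ∩ epts s(c, d) := by
      intro hnz
      refine goalc (z1 ?_) tc
      have : t' * (σ * dt a b d) = 0 := by linarith
      exact (mul_eq_zero.1 this).resolve_right hnz
    rcases td with td | td | td
    · exact key (sd.1 td).ne'
    · exact key (sd.2 td).ne
    · exfalso
      rcases tc with rfl | rfl <;> rcases td with rfl | rfl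
      · exact hcd rfl
      · exact hne rfl
      · exact hne Sym2.eq_swap
      · exact hcd rfl

theorem cross_core {S rk N} (h : RkOK S rk N) {a b c d : Pt} (ha : a ∈ S) (hb : b ∈ S)
    (hc : c ∈ S) (hd : d ∈ S) (h1 : rk a < rk c) (h2 : rk c < rk b) (h3 : rk b < rk d) :
    ¬ NoCrossPair s(a, b) s(c, d) := by
  have p1 := h.2.2 a ha c hc b hb h1 h2
  have p2 := h.2.2 a ha b hb d hd (h1.trans h2) h3
  have p3 := h.2.2 c hc b hb d hd h2 h3
  have p4 := h.2.2 a ha c hc d hd h1 (h2.trans h3)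
  have hsum : dt a c b + dt a b d = dt c b d + dt a c d := by simp only [dt]; ring
  intro hn
  have hx : (dt c b d / (dt a c b + dt a b d)) • a + (dt a c d / (dt a c b + dt a b d)) • b
      = (dt a b d / (dt a c b + dt a b d)) • c + (dt a c b / (dt a c b + dt a b d)) • d := by
    ext
    · simp only [Prod.fst_add, Prod.smul_fst, smul_eq_mul]
      field_simp
      simp only [dt]; ring
    · simp only [Prod.snd_add, Prod.smul_snd, smul_eq_mul]
      field_simp
      simp only [dt]; ring
  have := @hn ((dt c b d / (dt a c b + dt a b d)) • a + (dt a c d / (dt a c b + dt a b d)) • b)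
    ⟨⟨_, _, by positivity, by positivity, by field_simp; linarith, rfl⟩,
     ⟨_, _, by positivity, by positivity, by field_simp; linarith, hx.symm⟩⟩
  obtain ⟨m1, m2⟩ := this
  generalize (dt c b d / (dt a c b + dt a b d)) • a + (dt a c d / (dt a c b + dt a b d)) • b = x
    at m1 m2
  simp only [epts, Set.mem_ofPred_eq, Sym2.mem_iff] at m1 m2
  rcases m1 with rfl | rfl <;> rcases m2 with m2 | m2 <;>
    have := congrArg rk m2 <;> omega

theorem NoCrossPair.symm {e f : Sym2 Pt} (h : NoCrossPair e f) : NoCrossPair f e :=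
  fun _ hx => (h hx.symm).symm

theorem not_alt_of_nocross {S rk N} (h : RkOK S rk N) {a b c d : Pt} (ha : a ∈ S) (hb : b ∈ S)
    (hc : c ∈ S) (hd : d ∈ S) (hn : NoCrossPair s(a, b) s(c, d)) :
    ¬ Alt (rk a) (rk b) (rk c) (rk d) := by
  have hn1 : NoCrossPair s(b, a) s(c, d) := by rwa [Sym2.eq_swap (a := b)]
  have hn2 : NoCrossPair s(a, b) s(d, c) := by rwa [Sym2.eq_swap (a := d)]
  have hn3 : NoCrossPair s(b, a) s(d, c) := by rwa [Sym2.eq_swap (a := d)]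
  have c1 : ¬ (rk a < rk c ∧ rk c < rk b ∧ rk b < rk d) :=
    fun x => cross_core h ha hb hc hd x.1 x.2.1 x.2.2 hn
  have c2 : ¬ (rk b < rk c ∧ rk c < rk a ∧ rk a < rk d) :=
    fun x => cross_core h hb ha hc hd x.1 x.2.1 x.2.2 hn1
  have c3 : ¬ (rk a < rk d ∧ rk d < rk b ∧ rk b < rk c) :=
    fun x => cross_core h ha hb hd hc x.1 x.2.1 x.2.2 hn2
  have c4 : ¬ (rk b < rk d ∧ rk d < rk a ∧ rk a < rk c) :=
    fun x => cross_core h hb ha hd hc x.1 x.2.1 x.2.2 hn3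
  have c5 : ¬ (rk c < rk a ∧ rk a < rk d ∧ rk d < rk b) :=
    fun x => cross_core h hc hd ha hb x.1 x.2.1 x.2.2 hn.symm
  have c6 : ¬ (rk c < rk b ∧ rk b < rk d ∧ rk d < rk a) :=
    fun x => cross_core h hc hd hb ha x.1 x.2.1 x.2.2 hn1.symm
  have c7 : ¬ (rk d < rk a ∧ rk a < rk c ∧ rk c < rk b) :=
    fun x => cross_core h hd hc ha hb x.1 x.2.1 x.2.2 hn2.symm
  have c8 : ¬ (rk d < rk b ∧ rk b < rk c ∧ rk c < rk a) :=
    fun x => cross_core h hd hc hb ha x.1 x.2.1 x.2.2 hn3.symm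
  unfold Alt InN OutN
  omega

theorem dt_nonneg_interior {a b p q r : Pt} (hab : a ≠ b) {σ : ℝ} (hσ : σ ≠ 0)
    (hp : 0 ≤ σ * dt a b p) (hq : 0 ≤ σ * dt a b q)
    (hr : 0 ≤ σ * dt a b r) : Disjoint (segOf s(a, b)) (triInt p q r) := by
  rw [Set.disjoint_left]
  intro x hx hxt
  obtain ⟨s, t, hs0, ht0, hst, hx⟩ := hx
  simp only [] at hx
  have e1 : dt a b x = 0 := by
    rw [← hx, dt_aff _ _ _ _ _ _ hst, dt_self1, dt_self2]; ring
  have hconv : Convex ℝ {y : Pt | 0 ≤ σ * dt a b y} := by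
    intro y hy z hz s t hs ht hst
    simp only [Set.mem_ofPred_eq] at *
    rw [dt_aff _ _ _ _ _ _ hst]
    have := mul_nonneg hs hy
    have := mul_nonneg ht hz
    linarith
  have hsub : convexHull ℝ ({p, q, r} : Set Pt) ⊆ {y : Pt | 0 ≤ σ * dt a b y} := by
    apply convexHull_min _ hconv
    rintro y (rfl | rfl | rfl) <;> assumption
  have hxi := interior_mono hsub hxt
  rw [mem_interior_iff_mem_nhds] at hxi
  -- perturb x in the direction which decreases
  let g : ℝ → Pt := fun τ => (x.1 + τ * (σ * (b.2 - a.2)), x.2 - τ * (σ * (b.1 - a.1)))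
  have hg : Continuous g := by fun_prop
  have hg0 : g 0 = x := by simp [g]
  have hev := hg.continuousAt.preimage_mem_nhds (x := (0 : ℝ)) (t := {y : Pt | 0 ≤ σ * dt a b y})
    (by rw [hg0]; exact hxi)
  obtain ⟨ε, hε, hball⟩ := Metric.mem_nhds_iff.1 hev
  have hm := @hball (ε / 2) (by simp [abs_of_pos hε, hε])
  simp only [Set.mem_preimage, Set.mem_ofPred_eq] at hm
  have : σ * dt a b (g (ε / 2)) = σ * dt a b x
      - (ε / 2) * σ ^ 2 * ((b.2 - a.2) ^ 2 + (b.1 - a.1) ^ 2) := by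
    simp only [g, dt]; ring
  rw [this, e1] at hm
  have hpos : 0 < (b.2 - a.2) ^ 2 + (b.1 - a.1) ^ 2 := by
    by_contra hc
    apply hab
    have h1 : b.2 - a.2 = 0 := by nlinarith [sq_nonneg (b.2 - a.2), sq_nonneg (b.1 - a.1)]
    have h2 : b.1 - a.1 = 0 := by nlinarith [sq_nonneg (b.2 - a.2), sq_nonneg (b.1 - a.1)]
    ext <;> linarith
  have hσ2 : 0 < σ ^ 2 := by positivity
  have : 0 < (ε / 2) * σ ^ 2 * ((b.2 - a.2) ^ 2 + (b.1 - a.1) ^ 2) := by positivity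
  linarith

theorem disj_tri {S rk N} (h : RkOK S rk N) {a b p q r : Pt} (ha : a ∈ S) (hb : b ∈ S)
    (hp : p ∈ S) (hq : q ∈ S) (hr : r ∈ S) (hab : a ≠ b)
    (h1 : ¬ Alt (rk a) (rk b) (rk p) (rk q)) (h2 : ¬ Alt (rk a) (rk b) (rk q) (rk r))
    (h3 : ¬ Alt (rk a) (rk b) (rk p) (rk r)) : Disjoint (segOf s(a, b)) (triInt p q r) := by
  obtain ⟨σ, hσ, hs⟩ := line_side h ha hb hab
  have zero : ∀ y, (y = a ∨ y = b) → dt a b y = 0 := by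
    rintro y (rfl | rfl)
    · exact dt_self1 _ _
    · exact dt_self2 _ _
  by_cases hin : InN (rk a) (rk b) (rk p) ∨ InN (rk a) (rk b) (rk q) ∨ InN (rk a) (rk b) (rk r)
  · have : ∀ y ∈ S, ¬ OutN (rk a) (rk b) (rk y) → 0 ≤ σ * dt a b y := by
      intro y hy hy'
      rcases trichN h ha hb hy hab with t | t | t
      · exact ((hs y hy).1 t).le
      · exact absurd t hy'
      · rw [zero y t]; simp
    unfold Alt at h1 h2 h3
    exact dt_nonneg_interior hab hσ (this p hp (by unfold InN OutN at *; omega))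
      (this q hq (by unfold InN OutN at *; omega)) (this r hr (by unfold InN OutN at *; omega))
  · have : ∀ y ∈ S, ¬ InN (rk a) (rk b) (rk y) → 0 ≤ (-σ) * dt a b y := by
      intro y hy hy'
      rcases trichN h ha hb hy hab with t | t | t
      · exact absurd t hy'
      · have := (hs y hy).2 t; linarith
      · rw [zero y t]; simp
    push Not at hin
    exact dt_nonneg_interior hab (neg_ne_zero.2 hσ) (this p hp hin.1)
      (this q hq hin.2.1) (this r hr hin.2.2)

theorem card_connected {S : Finset Pt} {F : Finset (Sym2 Pt)} (hne : S.Nonempty)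
    (hF : ∀ e ∈ F, ¬ e.IsDiag ∧ ∀ p ∈ e, p ∈ S)
    (hc : ∀ p ∈ S, ∀ q ∈ S, Relation.ReflTransGen (fun a b => s(a, b) ∈ F) p q) :
    S.card ≤ F.card + 1 := by
  let G : SimpleGraph S :=
    { Adj := fun a b => s(a.1, b.1) ∈ F
      symm := ⟨fun a b h => by rwa [Sym2.eq_swap]⟩
      loopless := ⟨fun a h => (hF _ h).1 (by simp)⟩ }
  have hreach : ∀ (p q : Pt), Relation.ReflTransGen (fun a b => s(a, b) ∈ F) p q →
      ∀ (hp : p ∈ S), ∃ hq : q ∈ S, G.Reachable ⟨p, hp⟩ ⟨q, hq⟩ := by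
    intro p q h hp
    induction h with
    | refl => exact ⟨hp, SimpleGraph.Reachable.refl _⟩
    | tail h1 h2 ih =>
      obtain ⟨hb, ih⟩ := ih
      have hc := (hF _ h2).2 _ (Sym2.mem_mk_right _ _)
      refine ⟨hc, ih.trans (SimpleGraph.Adj.reachable ?_)⟩
      exact h2
  have hconn : G.Connected := by
    have : Nonempty S := hne.to_subtype
    refine SimpleGraph.Connected.mk ?_
    rintro ⟨p, hp⟩ ⟨q, hq⟩
    exact (hreach p q (hc p hp q hq) hp).2
  have h1 := hconn.card_vert_le_card_edgeSet_add_one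
  have h2 : Nat.card G.edgeSet ≤ F.card := by
    have : Function.Injective (Sym2.map (Subtype.val : S → Pt)) :=
      Sym2.map.injective Subtype.val_injective
    have hmem : ∀ e ∈ G.edgeSet, Sym2.map (Subtype.val : S → Pt) e ∈ F := by
      intro e he
      induction e with | _ x y => exact he
    have := Nat.card_le_card_of_injective
      (fun e : G.edgeSet => (⟨Sym2.map (Subtype.val : S → Pt) e.1, hmem e.1 e.2⟩ : F))
      (fun e e' h => Subtype.ext (this (congrArg Subtype.val h)))
    simpa only [Nat.card_eq_fintype_card, Fintype.card_coe] using this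
  rw [Nat.card_eq_fintype_card, Fintype.card_coe] at h1
  omega

theorem consec_card {α : Type*} (k : α → ℕ) (A : Finset α) : Set.InjOn k A → A.Nonempty →
    ((A ×ˢ A).filter (fun x => x.1 ≠ x.2 ∧ ∀ y ∈ A, ¬ InN (k x.1) (k x.2) (k y))).card + 2
      = 2 * A.card := by
  induction A using Finset.induction_on_max_value k with
  | empty => simp
  | insert a s ha hmax ih =>
    intro hinj _
    rcases s.eq_empty_or_nonempty with rfl | hs
    · have : ((insert a (∅ : Finset α)) ×ˢ (insert a (∅ : Finset α))).filter
          (fun x => x.1 ≠ x.2 ∧ ∀ y ∈ insert a (∅ : Finset α), ¬ InN (k x.1) (k x.2) (k y)) = ∅ := by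
        ext ⟨x, y⟩; simp; rintro rfl rfl; simp
      rw [this]; simp
    have hinj' : Set.InjOn k s := hinj.mono (by simp)
    have ih := ih hinj' hs
    obtain ⟨m, hm, hmm⟩ := s.exists_max_image k hs
    have hlt : ∀ x ∈ s, k x < k a := by
      intro x hx
      refine lt_of_le_of_ne (hmax x hx) fun h => ha ?_
      rwa [← hinj (by simp [hx]) (by simp) h]
    have hmn : ∀ x ∈ s, x ≠ m → k x < k m := by
      intro x hx hne
      exact lt_of_le_of_ne (hmm x hx) fun h => hne (hinj' hx hm h)
    have hEq : ((insert a s) ×ˢ (insert a s)).filter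
          (fun x => x.1 ≠ x.2 ∧ ∀ y ∈ insert a s, ¬ InN (k x.1) (k x.2) (k y))
        = insert (m, a) (insert (a, m) ((s ×ˢ s).filter
          (fun x => x.1 ≠ x.2 ∧ ∀ y ∈ s, ¬ InN (k x.1) (k x.2) (k y)))) := by
      ext ⟨x, y⟩
      have ham : a ≠ m := by rintro rfl; exact ha hm
      have hma := hlt m hm
      simp only [Finset.mem_filter, Finset.mem_product, Finset.mem_insert, Prod.mk.injEq,
        forall_eq_or_imp]
      constructor
      · rintro ⟨⟨rfl | hx, rfl | hy⟩, hne, h1, h2⟩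
        · exact absurd rfl hne
        · right; left
          refine ⟨rfl, ?_⟩
          by_contra hym
          have := hmn y hy hym
          have := h2 m hm
          unfold InN at this; omega
        · left
          refine ⟨?_, rfl⟩
          by_contra hym
          have := hmn x hx hym
          have := h2 m hm
          unfold InN at this; omega
        · exact .inr (.inr ⟨⟨hx, hy⟩, hne, h2⟩)
      · rintro (⟨rfl, rfl⟩ | ⟨rfl, rfl⟩ | ⟨⟨hx, hy⟩, hne, h2⟩)
        · refine ⟨⟨.inr hm, .inl rfl⟩, ham.symm, by unfold InN; omega, fun z hz => ?_⟩
          have := hmm z hz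
          have := hlt z hz
          unfold InN; omega
        · refine ⟨⟨.inl rfl, .inr hm⟩, ham, by unfold InN; omega, fun z hz => ?_⟩
          have := hmm z hz
          have := hlt z hz
          unfold InN; omega
        · refine ⟨⟨.inr hx, .inr hy⟩, hne, ?_, h2⟩
          have := hlt x hx
          have := hlt y hy
          unfold InN; omega
    rw [hEq, Finset.card_insert_of_notMem, Finset.card_insert_of_notMem,
      Finset.card_insert_of_notMem ha]
    · omega
    · simp [ha]
    · have ham : a ≠ m := by rintro rfl; exact ha hm
      simp [ha, ham.symm]

theorem sum_deg {S : Finset Pt} {E : Finset (Sym2 Pt)}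
    (hF : ∀ e ∈ E, ¬ e.IsDiag ∧ ∀ p ∈ e, p ∈ S) :
    ∑ q ∈ S, (S.filter (fun p => s(q, p) ∈ E)).card = 2 * E.card := by
  have h1 : ∀ q ∈ S, (S.filter (fun p => s(q, p) ∈ E)).card = (E.filter (fun e => q ∈ e)).card := by
    intro q hq
    refine Finset.card_bij (fun p _ => s(q, p)) ?_ ?_ ?_
    · intro p hp; simp at hp ⊢; exact hp.2
    · intro p _ p' _ h; exact Sym2.congr_right.1 h
    · intro e he
      simp only [Finset.mem_filter] at he
      obtain ⟨he, hqe⟩ := he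
      obtain ⟨p, rfl⟩ := hqe
      exact ⟨p, by simp [he, (hF _ he).2 p (Sym2.mem_mk_right _ _)], rfl⟩
  rw [Finset.sum_congr rfl h1]
  have := Finset.sum_card_bipartiteAbove_eq_sum_card_bipartiteBelow (s := S) (t := E)
    (fun q e => q ∈ e)
  simp only [Finset.bipartiteAbove, Finset.bipartiteBelow] at this
  rw [this, Finset.sum_const_nat (m := 2)]
  · ring
  · intro e he
    obtain ⟨h1, h2⟩ := hF e he
    induction e with | _ x y =>
    have hxy : x ≠ y := by simpa using h1
    have : S.filter (fun q => q ∈ s(x, y)) = {x, y} := by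
      ext z; simp only [Finset.mem_filter, Sym2.mem_iff, Finset.mem_insert, Finset.mem_singleton]
      constructor
      · exact fun h => h.2
      · intro h; exact ⟨h2 z (by simpa using h), h⟩
    rw [this, Finset.card_pair hxy]

def Wedge (E : Finset (Sym2 Pt)) (rk : Pt → ℕ) (p q r : Pt) : Prop :=
  s(p, q) ∈ E ∧ s(q, r) ∈ E ∧ p ≠ r ∧
    ∀ a b, s(a, b) ∈ E → ¬ Alt (rk p) (rk r) (rk a) (rk b)

def newE (E : Finset (Sym2 Pt)) (p q r : Pt) : Finset (Sym2 Pt) :=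
  insert s(p, r) (E.erase s(p, q))

theorem reach_mono {E E' : Finset (Sym2 Pt)}
    (h : ∀ a b, s(a, b) ∈ E → Relation.ReflTransGen (fun a b => s(a, b) ∈ E') a b)
    {x y : Pt} (hxy : Relation.ReflTransGen (fun a b => s(a, b) ∈ E) x y) :
    Relation.ReflTransGen (fun a b => s(a, b) ∈ E') x y := by
  induction hxy with
  | refl => exact .refl
  | tail _ h2 ih => exact ih.trans (h _ _ h2)

/-- replacing the edge `pq` by a two-path `p r q` keeps connectivity -/
theorem reach_detour {E E' : Finset (Sym2 Pt)} {p q r : Pt} (h1 : s(p, r) ∈ E') (h2 : s(q, r) ∈ E')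
    (h : ∀ e ∈ E, e ≠ s(p, q) → e ∈ E') {x y : Pt}
    (hxy : Relation.ReflTransGen (fun a b => s(a, b) ∈ E) x y) :
    Relation.ReflTransGen (fun a b => s(a, b) ∈ E') x y := by
  refine reach_mono (fun a b hab => ?_) hxy
  by_cases hc : s(a, b) = s(p, q)
  · have h1' : s(r, p) ∈ E' := by rwa [Sym2.eq_swap]
    have h2' : s(r, q) ∈ E' := by rwa [Sym2.eq_swap]
    rw [Sym2.eq_iff] at hc
    rcases hc with ⟨rfl, rfl⟩ | ⟨rfl, rfl⟩
    · exact .tail (.single h1) h2'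
    · exact .tail (.single h2) h1'
  · exact .single (h _ hab hc)

theorem no_tri {S : Finset Pt} {E : Finset (Sym2 Pt)} (hE : IsPST S E) {p q r : Pt}
    (h1 : s(p, q) ∈ E) (h2 : s(q, r) ∈ E) (hpr : p ≠ r) : s(p, r) ∉ E := by
  intro h3
  have hpS := (hE.1 _ h1).2 p (Sym2.mem_mk_left _ _)
  have hpq : p ≠ q := by simpa using (hE.1 _ h1).1
  have hqr : q ≠ r := by simpa using (hE.1 _ h2).1
  have := card_connected (S := S) (F := E.erase s(p, q)) ⟨p, hpS⟩
    (fun e he => hE.1 e (Finset.mem_of_mem_erase he))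
    (fun x hx y hy => reach_detour (p := p) (q := q) (r := r)
      (Finset.mem_erase.2 ⟨by simp; grind, h3⟩)
      (Finset.mem_erase.2 ⟨by simp; grind, h2⟩)
      (fun e he hne => Finset.mem_erase.2 ⟨hne, he⟩) (hE.2.2.2 x hx y hy))
  rw [Finset.card_erase_of_mem h1] at this
  have h4 := hE.2.2.1
  have : 0 < E.card := Finset.card_pos.2 ⟨_, h1⟩
  omega

theorem alt_comm {a b c d : ℕ} : Alt a b c d ↔ Alt c d a b := by
  unfold Alt InN OutN; omega

theorem alt_swap {a b c d : ℕ} : Alt a b c d ↔ Alt b a c d := by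
  unfold Alt InN OutN; omega

theorem newE_sdiff {E : Finset (Sym2 Pt)} {p q r : Pt} (h1 : s(p, q) ∈ E) (h3 : s(p, r) ∉ E) :
    E \ newE E p q r = {s(p, q)} ∧ newE E p q r \ E = {s(p, r)} := by
  have hne : s(p, q) ≠ s(p, r) := fun h => h3 (h ▸ h1)
  unfold newE
  constructor
  · ext e; simp only [Finset.mem_sdiff, Finset.mem_insert, Finset.mem_erase, Finset.mem_singleton]
    grind
  · ext e; simp only [Finset.mem_sdiff, Finset.mem_insert, Finset.mem_erase, Finset.mem_singleton]
    grind

theorem slide_of_wedge {S rk N} (h : RkOK S rk N) {E : Finset (Sym2 Pt)} (hE : IsPST S E)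
    {p q r : Pt} (hw : Wedge E rk p q r) :
    IsPST S (newE E p q r) ∧ s(q, r) ∈ newE E p q r ∧
      ∀ g ∈ E ∪ newE E p q r, Disjoint (segOf g) (triInt p q r) := by
  obtain ⟨h1, h2, hpr, halt⟩ := hw
  have h3 := no_tri hE h1 h2 hpr
  have hp := (hE.1 _ h1).2 p (Sym2.mem_mk_left _ _)
  have hq := (hE.1 _ h1).2 q (Sym2.mem_mk_right _ _)
  have hr := (hE.1 _ h2).2 r (Sym2.mem_mk_right _ _)
  have hpq : p ≠ q := by simpa using (hE.1 _ h1).1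
  have hqr : q ≠ r := by simpa using (hE.1 _ h2).1
  have hqr' : s(q, r) ∈ newE E p q r := by
    refine Finset.mem_insert_of_mem (Finset.mem_erase.2 ⟨by simp; grind, h2⟩)
  have hedge : ∀ e ∈ newE E p q r, ¬ e.IsDiag ∧ ∀ p ∈ e, p ∈ S := by
    intro e he
    rcases Finset.mem_insert.1 he with rfl | he
    · refine ⟨by simpa using hpr, fun x hx => ?_⟩
      rcases Sym2.mem_iff.1 hx with rfl | rfl <;> assumption
    · exact hE.1 e (Finset.mem_of_mem_erase he)
  have hnc : ∀ f ∈ E, NoCrossPair s(p, r) f := by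
    intro f hf
    induction f with | _ a b =>
    have ha := (hE.1 _ hf).2 a (Sym2.mem_mk_left _ _)
    have hb := (hE.1 _ hf).2 b (Sym2.mem_mk_right _ _)
    have hab : a ≠ b := by simpa using (hE.1 _ hf).1
    exact nocross_of_not_alt h hp hr ha hb hpr hab (fun h => h3 (h ▸ hf)) (halt a b hf)
  have haltE : ∀ a b c d, s(a, b) ∈ E → s(c, d) ∈ E →
      ¬ Alt (rk a) (rk b) (rk c) (rk d) := by
    intro a b c d hab hcd
    by_cases heq : s(a, b) = s(c, d)
    · rw [Sym2.eq_iff] at heq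
      rcases heq with ⟨rfl, rfl⟩ | ⟨rfl, rfl⟩ <;> (unfold Alt InN OutN; omega)
    exact not_alt_of_nocross h ((hE.1 _ hab).2 _ (Sym2.mem_mk_left _ _))
      ((hE.1 _ hab).2 _ (Sym2.mem_mk_right _ _))
      ((hE.1 _ hcd).2 _ (Sym2.mem_mk_left _ _))
      ((hE.1 _ hcd).2 _ (Sym2.mem_mk_right _ _)) (hE.2.1 _ hab _ hcd heq)
  refine ⟨⟨hedge, ?_, ?_, ?_⟩, hqr', ?_⟩
  · intro e he f hf hef
    rcases Finset.mem_insert.1 he with rfl | he <;> rcases Finset.mem_insert.1 hf with rfl | hf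
    · exact absurd rfl hef
    · exact hnc f (Finset.mem_of_mem_erase hf)
    · exact (hnc e (Finset.mem_of_mem_erase he)).symm
    · exact hE.2.1 e (Finset.mem_of_mem_erase he) f (Finset.mem_of_mem_erase hf) hef
  · have h4 := hE.2.2.1
    have : 0 < E.card := Finset.card_pos.2 ⟨_, h1⟩
    unfold newE
    rw [Finset.card_insert_of_notMem (fun h => h3 (Finset.mem_of_mem_erase h)),
      Finset.card_erase_of_mem h1]
    omega
  · intro x hx y hy
    refine reach_detour (p := p) (q := q) (r := r) (Finset.mem_insert_self _ _) hqr' ?_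
      (hE.2.2.2 x hx y hy)
    exact fun e he hne => Finset.mem_insert_of_mem (Finset.mem_erase.2 ⟨hne, he⟩)
  · intro g hg
    have hg' : g ∈ E ∨ g = s(p, r) := by
      rcases Finset.mem_union.1 hg with hg | hg
      · exact .inl hg
      · rcases Finset.mem_insert.1 hg with hg | hg
        · exact .inr hg
        · exact .inl (Finset.mem_of_mem_erase hg)
    rcases hg' with hg' | rfl
    · induction g with | _ a b =>
      have ha := (hE.1 _ hg').2 a (Sym2.mem_mk_left _ _)
      have hb := (hE.1 _ hg').2 b (Sym2.mem_mk_right _ _)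
      have hab : a ≠ b := by simpa using (hE.1 _ hg').1
      exact disj_tri h ha hb hp hq hr hab (haltE _ _ _ _ hg' h1) (haltE _ _ _ _ hg' h2)
        (fun hh => halt a b hg' (alt_comm.1 hh))
    · exact disj_tri h hp hr hp hq hr hpr (halt _ _ h1) (halt _ _ h2)
        (by unfold Alt InN OutN; omega)

/-- Converse: the data of a slide gives a wedge. -/
theorem wedge_of_slide {S rk N} (h : RkOK S rk N) {E E' : Finset (Sym2 Pt)} (hE : IsPST S E)
    (hE' : IsPST S E') {p q r : Pt} (h1 : E \ E' = {s(p, q)}) (h2 : E' \ E = {s(p, r)})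
    (h3 : s(q, r) ∈ E) : Wedge E rk p q r ∧ E' = newE E p q r := by
  have m1 : s(p, q) ∈ E ∧ s(p, q) ∉ E' := by
    rw [← Finset.mem_sdiff, h1]; simp
  have m2 : s(p, r) ∈ E' ∧ s(p, r) ∉ E := by
    rw [← Finset.mem_sdiff, h2]; simp
  have hpr : p ≠ r := by simpa using (hE'.1 _ m2.1).1
  have hp := (hE.1 _ m1.1).2 p (Sym2.mem_mk_left _ _)
  have hr := (hE.1 _ h3).2 r (Sym2.mem_mk_right _ _)
  have hEq : ∀ e, e ∈ E' ↔ e = s(p, r) ∨ (e ≠ s(p, q) ∧ e ∈ E) := by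
    intro e
    have e1 := Finset.ext_iff.1 h1 e
    have e2 := Finset.ext_iff.1 h2 e
    simp only [Finset.mem_sdiff, Finset.mem_singleton] at e1 e2
    grind
  refine ⟨⟨m1.1, h3, hpr, ?_⟩, ?_⟩
  · intro a b hab
    have ha := (hE.1 _ hab).2 a (Sym2.mem_mk_left _ _)
    have hb := (hE.1 _ hab).2 b (Sym2.mem_mk_right _ _)
    by_cases hc : s(a, b) = s(p, q)
    · rw [Sym2.eq_iff] at hc
      rcases hc with ⟨rfl, rfl⟩ | ⟨rfl, rfl⟩ <;> (unfold Alt InN OutN; omega)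
    · refine not_alt_of_nocross h hp hr ha hb (hE'.2.1 _ m2.1 _ ((hEq _).2 (.inr ⟨hc, hab⟩)) ?_)
      intro hh; exact m2.2 (hh ▸ hab)
  · ext e; rw [hEq]; simp [newE]

def keyN (rk : Pt → ℕ) (N : ℕ) (q x : Pt) : ℕ := if rk x < rk q then rk x + N else rk x

theorem nat1 {p q r y N : ℕ} (hp : p < N) (hq : q < N) (hr : r < N) (hy : y < N)
    (h1 : q ≠ p) (h2 : q ≠ r) (h3 : q ≠ y) :
    InN (if p < q then p + N else p) (if r < q then r + N else r) (if y < q then y + N else y) ↔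
    Alt p r q y := by
  unfold Alt InN OutN
  split_ifs <;> omega

theorem nat3 {p q r a b : ℕ} (h1 : q ≠ p) (h2 : q ≠ r) (ha : a ≠ q) (hb : b ≠ q)
    (x1 : ¬ Alt q p a b) (x2 : ¬ Alt q r a b) : ¬ Alt p r a b := by
  have aux : ∀ a b, a ≠ q → b ≠ q → ¬ Alt q p a b → ¬ Alt q r a b →
      InN p r a → ¬ OutN p r b := by
    clear x1 x2 ha hb a b
    intro a b ha hb x1 x2 i o
    unfold Alt at x1 x2
    push Not at x1 x2
    obtain ⟨x1, x3⟩ := x1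
    obtain ⟨x2, x4⟩ := x2
    unfold InN OutN at *
    rcases i with i | i <;> rcases o with o | o <;> rcases lt_or_gt_of_ne ha with ha | ha <;>
      rcases lt_or_gt_of_ne hb with hb | hb <;> omega
  have y1 : ¬ Alt q p b a := by unfold Alt at *; tauto
  have y2 : ¬ Alt q r b a := by unfold Alt at *; tauto
  rintro (⟨i, o⟩ | ⟨i, o⟩)
  · exact aux a b ha hb x1 x2 i o
  · exact aux b a hb ha y1 y2 o i

theorem wedge_iff {S rk N} (h : RkOK S rk N) {E : Finset (Sym2 Pt)} (hE : IsPST S E)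
    {p q r : Pt} : Wedge E rk p q r ↔ s(q, p) ∈ E ∧ s(q, r) ∈ E ∧ p ≠ r ∧
      ∀ y, s(q, y) ∈ E → ¬ InN (keyN rk N q p) (keyN rk N q r) (keyN rk N q y) := by
  have haltE : ∀ a b c d, s(a, b) ∈ E → s(c, d) ∈ E →
      ¬ Alt (rk a) (rk b) (rk c) (rk d) := by
    intro a b c d hab hcd
    by_cases heq : s(a, b) = s(c, d)
    · rw [Sym2.eq_iff] at heq
      rcases heq with ⟨rfl, rfl⟩ | ⟨rfl, rfl⟩ <;> (unfold Alt InN OutN; omega)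
    exact not_alt_of_nocross h ((hE.1 _ hab).2 _ (Sym2.mem_mk_left _ _))
      ((hE.1 _ hab).2 _ (Sym2.mem_mk_right _ _))
      ((hE.1 _ hcd).2 _ (Sym2.mem_mk_left _ _))
      ((hE.1 _ hcd).2 _ (Sym2.mem_mk_right _ _)) (hE.2.1 _ hab _ hcd heq)
  obtain ⟨hN, hinj, -⟩ := h
  unfold Wedge
  rw [Sym2.eq_swap (a := p) (b := q)]
  refine and_congr_right fun h1 => and_congr_right fun h2 => and_congr_right fun hpr => ?_
  have mem : ∀ a b, s(a, b) ∈ E → a ∈ S ∧ b ∈ S := fun a b hab =>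
    ⟨(hE.1 _ hab).2 _ (Sym2.mem_mk_left _ _), (hE.1 _ hab).2 _ (Sym2.mem_mk_right _ _)⟩
  have hne : ∀ a b, s(a, b) ∈ E → rk a ≠ rk b := by
    intro a b hab hh
    exact (hE.1 _ hab).1 (by simpa using hinj a (mem a b hab).1 b (mem a b hab).2 hh)
  have hq := (mem _ _ h1).1
  have Np := hN p (mem _ _ h1).2
  have Nr := hN r (mem _ _ h2).2
  have Nq := hN q hq
  have n1 := hne _ _ h1
  have n2 := hne _ _ h2
  constructor
  · intro hh y hy hin
    have n3 := hne _ _ hy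
    exact hh q y hy ((nat1 Np Nq Nr (hN y (mem _ _ hy).2) n1 n2 n3).1 hin)
  · intro hh a b hab hal
    have x1 := haltE _ _ _ _ h1 hab
    have x2 := haltE _ _ _ _ h2 hab
    by_cases haq : rk a = rk q
    · have := hinj a (mem _ _ hab).1 q hq haq
      subst this
      exact hh b hab ((nat1 Np Nq Nr (hN b (mem _ _ hab).2) n1 n2 (hne _ _ hab)).2 hal)
    by_cases hbq : rk b = rk q
    · have := hinj b (mem _ _ hab).2 q hq hbq
      subst this
      have hba : s(b, a) ∈ E := by rwa [Sym2.eq_swap]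
      exact hh a hba ((nat1 Np Nq Nr (hN a (mem _ _ hab).1) n1 n2 (hne _ _ hba)).2
        (by unfold Alt at *; tauto))
    exact nat3 n1 n2 haq hbq x1 x2 hal

theorem wedge_card {S rk N} (h : RkOK S rk N) {E : Finset (Sym2 Pt)} (hE : IsPST S E)
    (hS : 3 ≤ S.card) :
    {t : Pt × Pt × Pt | Wedge E rk t.2.1 t.1 t.2.2}.ncard = 2 * (S.card - 2) := by
  let nb : Pt → Finset Pt := fun q => S.filter (fun p => s(q, p) ∈ E)
  let W : Pt → Finset (Pt × Pt) := fun q => (nb q ×ˢ nb q).filter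
    (fun x => x.1 ≠ x.2 ∧ ∀ y ∈ nb q, ¬ InN (keyN rk N q x.1) (keyN rk N q x.2) (keyN rk N q y))
  have mem : ∀ a b, s(a, b) ∈ E → a ∈ S ∧ b ∈ S := fun a b hab =>
    ⟨(hE.1 _ hab).2 _ (Sym2.mem_mk_left _ _), (hE.1 _ hab).2 _ (Sym2.mem_mk_right _ _)⟩
  have hset : {t : Pt × Pt × Pt | Wedge E rk t.2.1 t.1 t.2.2} =
      ((S.sigma W).map ⟨fun x : (_ : Pt) × (Pt × Pt) => ((x.1, x.2) : Pt × Pt × Pt), by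
        rintro ⟨a, b⟩ ⟨c, d⟩ h
        obtain ⟨h1, h2⟩ := Prod.mk.injEq .. ▸ h
        simp only at h1 h2; subst h1; subst h2; rfl⟩ : Finset _) := by
    ext ⟨q, p, r⟩
    simp only [Set.mem_ofPred_eq, wedge_iff h hE, Finset.coe_map, Set.mem_image, Finset.mem_coe,
      Finset.mem_sigma]
    constructor
    · rintro ⟨h1, h2, h3, h4⟩
      refine ⟨⟨q, (p, r)⟩, ⟨(mem _ _ h1).1, ?_⟩, rfl⟩
      simp only [W, nb, Finset.mem_filter, Finset.mem_product]
      exact ⟨⟨⟨(mem _ _ h1).2, h1⟩, ⟨(mem _ _ h2).2, h2⟩⟩, h3, fun y hy => h4 y hy.2⟩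
    · rintro ⟨⟨q', p', r'⟩, ⟨hq, hW⟩, heq⟩
      obtain ⟨rfl, rfl, rfl⟩ : q' = q ∧ p' = p ∧ r' = r :=
        ⟨congrArg (fun t => t.1) heq, congrArg (fun t => t.2.1) heq, congrArg (fun t => t.2.2) heq⟩
      simp only [W, nb, Finset.mem_filter, Finset.mem_product] at hW
      exact ⟨hW.1.1.2, hW.1.2.2, hW.2.1, fun y hy => hW.2.2 y ⟨(mem _ _ hy).2, hy⟩⟩
  rw [hset, Set.ncard_coe_finset, Finset.card_map, Finset.card_sigma]
  have hW : ∀ q ∈ S, (W q).card + 2 = 2 * (nb q).card := by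
    intro q hq
    have hcc := consec_card (keyN rk N q) (nb q) ?_ ?_
    · convert hcc
    · intro x hx y hy hxy
      simp only [nb, Finset.coe_filter, Set.mem_ofPred_eq] at hx hy
      have := h.1 x hx.1
      have := h.1 y hy.1
      apply h.2.1 x hx.1 y hy.1
      unfold keyN at hxy
      split_ifs at hxy <;> omega
    · obtain ⟨x, hx, hxq⟩ := Finset.exists_mem_ne (by omega : 1 < S.card) q
      rcases Relation.ReflTransGen.cases_head (hE.2.2.2 q hq x hx) with h1 | ⟨c, h1, -⟩
      · exact absurd h1.symm hxq
      · exact ⟨c, by simp only [nb, Finset.mem_filter]; exact ⟨(mem _ _ h1).2, h1⟩⟩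
  have hsum := Finset.sum_congr rfl hW
  rw [Finset.sum_add_distrib, ← Finset.mul_sum] at hsum
  have hd : ∑ q ∈ S, (nb q).card = 2 * E.card := sum_deg hE.1
  rw [hd] at hsum
  simp only [Finset.sum_const, smul_eq_mul] at hsum
  have := hE.2.2.1
  omega

theorem slide_card {S : Finset Pt} (hcv : ConvexPos S) {E : Finset (Sym2 Pt)} (hE : IsPST S E)
    (hS : 3 ≤ S.card) : {E' : Finset (Sym2 Pt) | EdgeSlide S E E'}.ncard = 2 * (S.card - 2) := by
  obtain ⟨rk, N, h⟩ := exists_rk S hcv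
  rw [← wedge_card h hE hS]
  have : {E' : Finset (Sym2 Pt) | EdgeSlide S E E'} =
      (fun t : Pt × Pt × Pt => newE E t.2.1 t.1 t.2.2) ''
        {t : Pt × Pt × Pt | Wedge E rk t.2.1 t.1 t.2.2} := by
    ext E'
    simp only [Set.mem_ofPred_eq, Set.mem_image]
    constructor
    · rintro ⟨_, hE', p, q, r, h1, h2, h3, h4, h5⟩
      have := wedge_of_slide h hE hE' h1 h2 h3
      exact ⟨(q, p, r), this.1, this.2.symm⟩
    · rintro ⟨⟨q, p, r⟩, hw, rfl⟩
      simp only at hw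
      have h3 := no_tri hE hw.1 hw.2.1 hw.2.2.1
      have h4 := slide_of_wedge h hE hw
      have h5 := newE_sdiff (q := q) hw.1 h3
      exact ⟨hE, h4.1, p, q, r, h5.1, h5.2, hw.2.1, h4.2.1, h4.2.2⟩
  rw [this, Set.InjOn.ncard_image]
  rintro ⟨q, p, r⟩ hw ⟨q', p', r'⟩ hw' heq
  simp only [Set.mem_ofPred_eq] at hw hw' heq
  have a1 := newE_sdiff (q := q) hw.1 (no_tri hE hw.1 hw.2.1 hw.2.2.1)
  have a2 := newE_sdiff (q := q') hw'.1 (no_tri hE hw'.1 hw'.2.1 hw'.2.2.1)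
  rw [heq] at a1
  have e1 : s(p, q) = s(p', q') := Finset.singleton_injective (a1.1.symm.trans a2.1)
  have e2 : s(p, r) = s(p', r') := Finset.singleton_injective (a1.2.symm.trans a2.2)
  have d1 : q ≠ r := by simpa using (hE.1 _ hw.2.1).1
  have d2 : q' ≠ r' := by simpa using (hE.1 _ hw'.2.1).1
  rw [Sym2.eq_iff] at e1 e2
  grind

theorem lab_card {S : Finset Pt} {E : Finset (Sym2 Pt)} {L : Sym2 Pt → ℕ}
    (hL : IsLabeledPST S (E, L)) :
    {T' : LTree | LabEdgeSlide S (E, L) T'}.ncard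
      = {E' : Finset (Sym2 Pt) | EdgeSlide S E E'}.ncard := by
  have : {E' : Finset (Sym2 Pt) | EdgeSlide S E E'} =
      Prod.fst '' {T' : LTree | LabEdgeSlide S (E, L) T'} := by
    ext E'
    simp only [Set.mem_ofPred_eq, Set.mem_image, Prod.exists, exists_and_right, exists_eq_right]
    constructor
    · rintro ⟨hE, hE', p, q, r, h1, h2, h3, h4, h5⟩
      have m1 : s(p, q) ∈ E ∧ s(p, q) ∉ E' := by
        rw [← Finset.mem_sdiff, h1]; simp
      have m2 : s(p, r) ∈ E' ∧ s(p, r) ∉ E := by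
        rw [← Finset.mem_sdiff, h2]; simp
      have hiff : ∀ e, e ≠ s(p, q) → e ≠ s(p, r) → (e ∈ E' ↔ e ∈ E) := by
        intro e n1 n2
        have e1 := Finset.ext_iff.1 h1 e
        have e2 := Finset.ext_iff.1 h2 e
        simp only [Finset.mem_sdiff, Finset.mem_singleton] at e1 e2
        grind
      have hsw : ∀ e, Equiv.swap s(p, q) s(p, r) e ∈ E ↔ e ∈ E' := by
        intro e
        by_cases n1 : e = s(p, q)
        · rw [n1, Equiv.swap_apply_left]; tauto
        by_cases n2 : e = s(p, r)
        · rw [n2, Equiv.swap_apply_right]; tauto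
        rw [Equiv.swap_apply_of_ne_of_ne n1 n2, hiff e n1 n2]
      refine ⟨fun e => L (Equiv.swap s(p, q) s(p, r) e), hL, ⟨hE', ?_, ?_⟩, p, q, r, h1, h2, h3, h4,
        h5, ?_, ?_⟩
      · refine hL.2.1.comp (t := (E : Set (Sym2 Pt))) ⟨?_, (Equiv.injective _).injOn, ?_⟩
        · intro e he; exact (hsw e).2 he
        · intro e he
          refine ⟨Equiv.swap s(p, q) s(p, r) e, ?_, Equiv.swap_apply_self _ _ _⟩
          apply (hsw _).1
          rw [Equiv.swap_apply_self]; exact he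
      · intro e he
        exact hL.2.2 _ (fun hh => he ((hsw e).1 hh))
      · simp
      · intro e he
        simp only [Finset.mem_inter] at he
        have n1 : e ≠ s(p, q) := by rintro rfl; exact m1.2 he.2
        have n2 : e ≠ s(p, r) := by rintro rfl; exact m2.2 he.1
        simp only [Equiv.swap_apply_of_ne_of_ne n1 n2]
    · rintro ⟨L', h1, h2, p, q, r, h3, h4, h5, h6, h7, -⟩
      exact ⟨h1.1, h2.1, p, q, r, h3, h4, h5, h6, h7⟩
  rw [this, Set.InjOn.ncard_image]
  rintro ⟨E1, L1⟩ ⟨_, hl1, p, q, r, a1, a2, -, -, -, a3, a4⟩ ⟨E2, L2⟩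
    ⟨_, hl2, p', q', r', b1, b2, -, -, -, b3, b4⟩ heq
  simp only at heq
  subst heq
  simp only at *
  have e1 : s(p, q) = s(p', q') := Finset.singleton_injective (a1.symm.trans b1)
  have e2 : s(p, r) = s(p', r') := Finset.singleton_injective (a2.symm.trans b2)
  rw [Prod.mk.injEq]
  refine ⟨rfl, funext fun e => ?_⟩
  by_cases he : e ∈ E1
  · by_cases he' : e ∈ E
    · rw [a4 e (Finset.mem_inter.2 ⟨he', he⟩), b4 e (Finset.mem_inter.2 ⟨he', he⟩)]
    · have : e ∈ E1 \ E := Finset.mem_sdiff.2 ⟨he, he'⟩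
      rw [a2, Finset.mem_singleton] at this
      rw [this, a3, e2, b3, e1]
  · exact (hl1.2.2 e he).trans (hl2.2.2 e he).symm

/-- on `n ≥ 3` points in convex position, every tree has exactly `2(n - 2)`
edge-slide neighbors, both in the unlabeled and in the edge-labeled transition graph. -/
theorem stmt_19 :
    ∀ S : Finset Pt, 3 ≤ S.card → ConvexPos S →
      ∀ E : Finset (Sym2 Pt), IsPST S E →
        {E' : Finset (Sym2 Pt) | EdgeSlide S E E'}.ncard = 2 * (S.card - 2) ∧
        ∀ L : Sym2 Pt → ℕ, IsLabeledPST S (E, L) →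
          {T' : LTree | LabEdgeSlide S (E, L) T'}.ncard = 2 * (S.card - 2) := by
  intro S hS hcv E hE
  exact ⟨slide_card hcv hE hS, fun L hL => (lab_card hL).trans (slide_card hcv hE hS)⟩
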